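/- Gauss–Green's formula: Let M ≥ 0 and let u, v ∈ D_M. Then ∫_{Σ_N^+} (v Δu − u Δv) dμ = Σ_{p ∈ V_M} (v(p) (du)(p) − u(p) (dv)(p)). -/

import Mathlib

open Filter Topology MeasureTheory Finset Classical

noncomputable section

/-- The one-sided full shift space `Σ_N^+` on `N` symbols; coordinates are indexed
from `0`, so the paper's `x_1 x_2 ⋯` is `x 0, x 1, ⋯` here. It carries the product
of the discrete topology on `Fin N`. -/
abbrev SSp (N : ℕ) : Type := ℕ → Fin N

/-- The level-`m` vertex set `V_m = {p : p_i = p_{i+1} for all i ≥ m+1}` (1-based),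
i.e. the sequences that are constant from (0-based) coordinate `m` on.  It is
realized as a `Finset` via the parametrization by the first `m+1` coordinates;
see `mem_V` for the defining property. -/
noncomputable def V (N m : ℕ) : Finset (SSp N) :=
  (Finset.univ : Finset (Fin (m + 1) → Fin N)).image
    (fun w j => w ⟨min j m, by omega⟩)

lemma const_from (N m : ℕ) (p : SSp N) (h : ∀ i, m ≤ i → p i = p (i + 1)) :
    ∀ j, m ≤ j → p j = p m := by
  intro j hj
  induction j with
  | zero => have : m = 0 := by omega
            simp [this]
  | succ k ih =>
      rcases Nat.lt_or_ge k m with hk | hk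
      · have : m = k + 1 := by omega
        simp [this]
      · rw [← h k hk]
        exact ih hk

/-- Membership in `V N m` is exactly the paper's condition
`p_i = p_{i+1}` for all `i ≥ m+1` (1-based), i.e. `p i = p (i+1)` for all `i ≥ m`. -/
lemma mem_V {N m : ℕ} {p : SSp N} :
    p ∈ V N m ↔ ∀ i, m ≤ i → p i = p (i + 1) := by
  classical
  constructor
  · intro hp i hi
    simp only [V, Finset.mem_image] at hp
    obtain ⟨w, -, rfl⟩ := hp
    have h1 : min i m = m := by omega
    have h2 : min (i + 1) m = m := by omega
    simp [h1, h2]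
  · intro h
    simp only [V, Finset.mem_image]
    refine ⟨fun j => p j, Finset.mem_univ _, ?_⟩
    funext j
    rcases Nat.lt_or_ge j m with hj | hj
    · have : min j m = j := by omega
      simp [this]
    · have : min j m = m := by omega
      simp only [this]
      exact (const_from N m p h j hj).symm

/-- The deleted neighbourhood `U_{p,m} = {q ∈ V_m : q ≠ p, q_i = p_i for 1 ≤ i ≤ m}`
(1-based), i.e. `q` agrees with `p` on the first `m` (0-based: `i < m`) coordinates. -/
noncomputable def U (N m : ℕ) (p : SSp N) : Finset (SSp N) :=
  (V N m).filter (fun q => q ≠ p ∧ ∀ i, i < m → q i = p i)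

/-- `κ_p = min {j : p ∈ V_j}`. -/
noncomputable def kappa (N : ℕ) (p : SSp N) : ℕ := sInf {j | p ∈ V N j}

/-- The difference operator
`H_m u (p) = Σ_{i = κ_p}^{m} Σ_{q ∈ U_{p,i}} (u(q) − u(p))`. -/
noncomputable def H (N m : ℕ) (u : SSp N → ℝ) (p : SSp N) : ℝ :=
  ∑ i ∈ Finset.Icc (kappa N p) m, ∑ q ∈ U N i p, (u q - u p)

/-- The Dirichlet form `E_{H_m}(u, v) = − Σ_{p ∈ V_m} u(p) · H_m v(p)`. -/
noncomputable def EH (N m : ℕ) (u v : SSp N → ℝ) : ℝ :=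
  -∑ p ∈ V N m, u p * H N m v p

/-- The cylinder set `[p_1 ⋯ p_m]`, determined by the first `m` coordinates of `p`. -/
def cyl (N m : ℕ) (p : SSp N) : Set (SSp N) := {x | ∀ i, i < m → x i = p i}

/-- `χ_p^m` : the indicator function of the cylinder set `[p_1 ⋯ p_{m+1}]`. -/
noncomputable def chi (N m : ℕ) (p : SSp N) : SSp N → ℝ :=
  (cyl N (m + 1) p).indicator 1

/-- `u ∈ dom E`: `u` is continuous and the energy
`E(u) = lim_m E_{H_m}(u|_{V_m})` exists (and is finite). -/
def MemDomE (N : ℕ) (u : SSp N → ℝ) : Prop :=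
  Continuous u ∧ ∃ L : ℝ, Tendsto (fun m => EH N m u u) atTop (nhds L)

/-- `v ∈ dom_M E`: `v` has finite energy and vanishes on the boundary `V_M`. -/
def MemDomME (N M : ℕ) (v : SSp N → ℝ) : Prop :=
  MemDomE N v ∧ ∀ p ∈ V N M, v p = 0

/-- `u ∈ 𝒟_M` with `Δ u = f` (strong formulation with boundary `V_M`):
`u` and `f` are continuous and
`lim_{m → ∞} max_{p ∈ V_m ∖ V_M} |N^{m+1} H_m u(p) − f(p)| = 0`. -/
def IsLaplacianOn (N M : ℕ) (u f : SSp N → ℝ) : Prop :=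
  Continuous u ∧ Continuous f ∧
    ∀ ε : ℝ, 0 < ε → ∃ m₀ : ℕ, ∀ m, m₀ ≤ m → ∀ p ∈ V N m, p ∉ V N M →
      |(N : ℝ) ^ (m + 1) * H N m u p - f p| < ε

/-- `u ∈ D_μ` with `Δ u = f` (original definition of the Laplacian):
`u` and `f` are continuous and
`lim_{m → ∞} max_{p ∈ V_m ∖ V_{m−1}} |N^{m+1} H_m u(p) − f(p)| = 0`
(the level is written `m+1` to avoid natural subtraction). -/
def IsLaplacianDmu (N : ℕ) (u f : SSp N → ℝ) : Prop :=
  Continuous u ∧ Continuous f ∧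
    ∀ ε : ℝ, 0 < ε → ∃ m₀ : ℕ, ∀ m, m₀ ≤ m → ∀ p ∈ V N (m + 1), p ∉ V N m →
      |(N : ℝ) ^ (m + 2) * H N (m + 1) u p - f p| < ε

/-- `μ` is the equidistributed Bernoulli measure:
`μ([p_1 ⋯ p_m]) = N^{−m}` for every cylinder set. -/
def IsBernoulli (N : ℕ) (μ : Measure (SSp N)) : Prop :=
  ∀ (m : ℕ) (p : SSp N), μ (cyl N m p) = (N : ENNReal)⁻¹ ^ m

/-- `ρ(x,y) = min {i : x_i ≠ y_i}` (1-based; `0`-based first disagreement plus one). -/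
noncomputable def rho (N : ℕ) (x y : SSp N) : ℕ := sInf {i | x i ≠ y i} + 1

/-- The matrix `(G_m)_{pq}`: `2/N` if `q = p`, `1/N` if `q ∈ U_{p,m}`, `0` otherwise. -/
noncomputable def Gmat (N m : ℕ) (p q : SSp N) : ℝ :=
  if q = p then 2 / N else if q ∈ U N m p then 1 / N else 0

/-- The Green's function
`g(x,y) = Σ_{m=1}^{ρ(x,y)−1} Σ_{r,s ∈ V_m ∖ V_{m−1}} (G_m)_{rs} χ_r^m(x) χ_s^m(y)`
for `ρ(x,y) > 1`, and `g(x,y) = 0` for `ρ(x,y) = 1` (the sum is then empty). -/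
noncomputable def greenFn (N : ℕ) (x y : SSp N) : ℝ :=
  ∑ m ∈ Finset.Icc 1 (rho N x y - 1),
    ∑ r ∈ (V N m).filter (fun r => r ∉ V N (m - 1)),
      ∑ s ∈ (V N m).filter (fun s => s ∉ V N (m - 1)),
        Gmat N m r s * chi N m r x * chi N m s y

/-- The Green's operator `G_μ f (x) = ∫_{Σ_N^+ ∖ {x}} g(x,y) f(y) dμ(y)`. -/
noncomputable def Gop (N : ℕ) (μ : Measure (SSp N)) (f : SSp N → ℝ) (x : SSp N) : ℝ :=
  ∫ y in ({x}ᶜ : Set (SSp N)), greenFn N x y * f y ∂μ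


lemma V_mono {N i j : ℕ} (h : i ≤ j) : V N i ⊆ V N j := fun _ hp =>
  mem_V.2 fun k hk => mem_V.1 hp k (h.trans hk)

lemma kappa_le_iff {N m i : ℕ} {p : SSp N} (hp : p ∈ V N m) :
    kappa N p ≤ i ↔ p ∈ V N i := by
  refine ⟨fun h => V_mono h ?_, fun h => Nat.sInf_le h⟩
  exact Nat.sInf_mem (s := {j | p ∈ V N j}) ⟨m, hp⟩

lemma mem_U_symm {N i : ℕ} {p q : SSp N} (hp : p ∈ V N i) (hq : q ∈ U N i p) :
    p ∈ U N i q := by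
  simp only [U, Finset.mem_filter] at hq ⊢
  exact ⟨hp, hq.2.1.symm, fun k hk => (hq.2.2 k hk).symm⟩

lemma eq_of_mem_V {N m : ℕ} {p q : SSp N} (hp : p ∈ V N m) (hq : q ∈ V N m)
    (h : ∀ i < m + 1, p i = q i) : p = q := by
  funext j
  rcases Nat.lt_or_ge j m with hj | hj
  · exact h j (by omega)
  · rw [const_from N m p (mem_V.1 hp) j hj, const_from N m q (mem_V.1 hq) j hj]
    exact h m (by omega)

/-- Splitting `H_m` by levels. -/
lemma sum_mul_H (N m : ℕ) (w u : SSp N → ℝ) :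
    ∑ p ∈ V N m, w p * H N m u p =
      ∑ i ∈ Finset.range (m + 1), ∑ p ∈ V N i, ∑ q ∈ U N i p, w p * (u q - u p) := by
  have hleft : ∀ p ∈ V N m, w p * H N m u p =
      ∑ i ∈ Finset.Icc (kappa N p) m, ∑ q ∈ U N i p, w p * (u q - u p) := fun p _ => by
    simp only [H, Finset.mul_sum]
  rw [Finset.sum_congr rfl hleft]
  refine Finset.sum_comm' fun p i => ?_
  simp only [Finset.mem_Icc, Finset.mem_range]
  constructor
  · rintro ⟨hp, hk, hi⟩
    exact ⟨(kappa_le_iff hp).1 hk, by omega⟩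
  · rintro ⟨hp, hi⟩
    exact ⟨V_mono (by omega) hp, (kappa_le_iff hp).2 hp, by omega⟩

/-- `H_m` is symmetric. -/
lemma sum_mul_H_comm (N m : ℕ) (w u : SSp N → ℝ) :
    ∑ p ∈ V N m, w p * H N m u p = ∑ p ∈ V N m, u p * H N m w p := by
  rw [sum_mul_H, sum_mul_H]
  refine Finset.sum_congr rfl fun i _ => ?_
  have hswap : ∑ p ∈ V N i, ∑ q ∈ U N i p, w p * u q =
      ∑ p ∈ V N i, ∑ q ∈ U N i p, u p * w q := by
    rw [Finset.sum_comm' (t' := V N i) (s' := fun q => U N i q)]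
    · simp only [mul_comm]
    · intro p q
      constructor
      · rintro ⟨hp, hq⟩
        exact ⟨mem_U_symm hp hq, (Finset.mem_filter.1 hq).1⟩
      · rintro ⟨hp, hq⟩
        exact ⟨(Finset.mem_filter.1 hp).1, mem_U_symm hq hp⟩
  simp only [mul_sub, Finset.sum_sub_distrib, hswap]
  simp only [mul_comm]

lemma card_V_le (N m : ℕ) : (V N m).card ≤ N ^ (m + 1) := by
  refine Finset.card_image_le.trans ?_
  simp

/-- The point of `V_m` agreeing with `x` on the first `m + 1` coordinates. -/
def truncate (N m : ℕ) (x : SSp N) : SSp N := fun j => x (min j m)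

lemma truncate_mem_V (N m : ℕ) (x : SSp N) : truncate N m x ∈ V N m :=
  mem_V.2 fun i hi => by
    simp [truncate, min_eq_right hi, min_eq_right (hi.trans (Nat.le_succ i))]

lemma mem_cyl_iff_truncate_eq {N m : ℕ} {x p : SSp N} (hp : p ∈ V N m) :
    x ∈ cyl N (m + 1) p ↔ truncate N m x = p := by
  constructor
  · intro h
    refine eq_of_mem_V (truncate_mem_V N m x) hp fun i hi => ?_
    rw [truncate, min_eq_left (by omega)]
    exact h i hi
  · rintro rfl i hi
    rw [truncate, min_eq_left (by omega)]

lemma tendsto_truncate (N : ℕ) (x : SSp N) :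
    Tendsto (fun m => truncate N m x) atTop (nhds x) := by
  refine tendsto_pi_nhds.2 fun j => tendsto_const_nhds.congr' ?_
  filter_upwards [eventually_ge_atTop j] with m hm
  rw [truncate, min_eq_left hm]

lemma measurable_truncate (N m : ℕ) : Measurable (truncate N m) :=
  measurable_pi_lambda _ fun _ => measurable_pi_apply _

lemma measurableSet_cyl (N m : ℕ) (p : SSp N) : MeasurableSet (cyl N m p) := by
  have h : cyl N m p = ⋂ i, ⋂ _ : i < m, (fun x : SSp N => x i) ⁻¹' {p i} := by
    ext x
    simp [cyl]
  rw [h]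
  exact MeasurableSet.iInter fun i => MeasurableSet.iInter fun _ =>
    measurable_pi_apply i (MeasurableSet.singleton _)

lemma integral_truncate {N : ℕ} {μ : Measure (SSp N)} [IsProbabilityMeasure μ]
    (hμ : IsBernoulli N μ) (m : ℕ) (h : SSp N → ℝ) :
    ∫ x, h (truncate N m x) ∂μ = ((N : ℝ) ^ (m + 1))⁻¹ * ∑ p ∈ V N m, h p := by
  have hpt : ∀ x, h (truncate N m x) =
      ∑ p ∈ V N m, (cyl N (m + 1) p).indicator (fun _ => h p) x := fun x => by
    rw [Finset.sum_eq_single_of_mem _ (truncate_mem_V N m x)]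
    · rw [Set.indicator_of_mem ((mem_cyl_iff_truncate_eq (truncate_mem_V N m x)).2 rfl)]
    · intro p hp hne
      exact Set.indicator_of_notMem
        (fun hx => hne ((mem_cyl_iff_truncate_eq hp).1 hx).symm) _
  simp only [hpt]
  rw [integral_finsetSum _ fun p _ =>
    (integrable_const (h p)).indicator (measurableSet_cyl N (m + 1) p), Finset.mul_sum]
  refine Finset.sum_congr rfl fun p _ => ?_
  rw [integral_indicator_const _ (measurableSet_cyl N (m + 1) p), Measure.real, hμ]
  simp

lemma exists_abs_le {N : ℕ} {h : SSp N → ℝ} (hh : Continuous h) :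
    ∃ C, 0 < C ∧ ∀ x, |h x| ≤ C := by
  obtain ⟨C, hC⟩ := isCompact_univ.exists_bound_of_continuousOn hh.continuousOn
  exact ⟨max C 1, by positivity, fun x => (hC x (Set.mem_univ x)).trans (le_max_left _ _)⟩

lemma integrable_of_continuous {N : ℕ} {μ : Measure (SSp N)} [IsProbabilityMeasure μ]
    {h : SSp N → ℝ} (hh : Continuous h) : Integrable h μ := by
  obtain ⟨C, -, hC⟩ := exists_abs_le hh
  exact Integrable.of_bound hh.measurable.aestronglyMeasurable C (ae_of_all _ hC)

/-- Averages over `V_m` converge to the integral. -/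
lemma tendsto_average {N : ℕ} {μ : Measure (SSp N)} [IsProbabilityMeasure μ]
    (hμ : IsBernoulli N μ) {h : SSp N → ℝ} (hh : Continuous h) :
    Tendsto (fun m : ℕ => ((N : ℝ) ^ (m + 1))⁻¹ * ∑ p ∈ V N m, h p) atTop
      (nhds (∫ x, h x ∂μ)) := by
  obtain ⟨C, -, hC⟩ := exists_abs_le hh
  simp only [← integral_truncate hμ]
  refine tendsto_integral_of_dominated_convergence (fun _ => C)
    (fun m => (hh.measurable.comp (measurable_truncate N m)).aestronglyMeasurable)
    (integrable_const C) (fun m => ae_of_all _ fun x => hC _)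
    (ae_of_all _ fun x => (hh.tendsto x).comp (tendsto_truncate N x))

lemma sum_V_split {N M m : ℕ} (hm : M ≤ m) (F : SSp N → ℝ) :
    ∑ p ∈ V N m, F p = ∑ p ∈ V N M, F p + ∑ p ∈ V N m \ V N M, F p := by
  rw [add_comm, Finset.sum_sdiff (V_mono hm)]

/-- The interior sums of `w · H_m u` converge to `∫ w Δu`. -/
lemma tendsto_sum_interior {N : ℕ} (hN : 2 ≤ N) {μ : Measure (SSp N)}
    [IsProbabilityMeasure μ] (hμ : IsBernoulli N μ) {M : ℕ} {u f w : SSp N → ℝ}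
    (huf : IsLaplacianOn N M u f) (hw : Continuous w) :
    Tendsto (fun m => ∑ p ∈ V N m \ V N M, w p * H N m u p) atTop
      (nhds (∫ x, w x * f x ∂μ)) := by
  obtain ⟨-, hf, hlim⟩ := huf
  obtain ⟨C, hC0, hC⟩ := exists_abs_le hw
  have hNpos : (0 : ℝ) < N := by exact_mod_cast (by omega : 0 < N)
  have hinv : Tendsto (fun m : ℕ => ((N : ℝ) ^ (m + 1))⁻¹) atTop (nhds 0) :=
    tendsto_inv_atTop_zero.comp ((tendsto_pow_atTop_atTop_of_one_lt
      (by exact_mod_cast (by omega : 1 < N))).comp (tendsto_add_atTop_nat 1))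
  have herr : Tendsto (fun m : ℕ => ((N : ℝ) ^ (m + 1))⁻¹ *
      ∑ p ∈ V N m \ V N M, w p * ((N : ℝ) ^ (m + 1) * H N m u p - f p)) atTop (nhds 0) := by
    refine Metric.tendsto_atTop.2 fun ε hε => ?_
    obtain ⟨m₀, hm₀⟩ := hlim (ε / (2 * C)) (by positivity)
    refine ⟨m₀, fun m hm => ?_⟩
    have hpow : (0 : ℝ) < (N : ℝ) ^ (m + 1) := by positivity
    have hcard : ((V N m \ V N M).card : ℝ) ≤ (N : ℝ) ^ (m + 1) := by
      exact_mod_cast (Finset.card_le_card Finset.sdiff_subset).trans (card_V_le N m)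
    have hsum : |∑ p ∈ V N m \ V N M, w p * ((N : ℝ) ^ (m + 1) * H N m u p - f p)| ≤
        (N : ℝ) ^ (m + 1) * (ε / 2) := by
      refine (Finset.abs_sum_le_sum_abs _ _).trans
        ((Finset.sum_le_card_nsmul _ _ (ε / 2) fun p hp => ?_).trans ?_)
      · rw [Finset.mem_sdiff] at hp
        rw [abs_mul]
        calc _ ≤ C * (ε / (2 * C)) :=
              mul_le_mul (hC p) (hm₀ m hm p hp.1 hp.2).le (abs_nonneg _) hC0.le
          _ = ε / 2 := by field_simp
      · rw [nsmul_eq_mul]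
        gcongr
    rw [Real.dist_eq, sub_zero, abs_mul, abs_of_pos (inv_pos.2 hpow), inv_mul_lt_iff₀ hpow]
    exact hsum.trans_lt (by gcongr; linarith)
  have hall := ((tendsto_average hμ (hw.mul hf)).sub
    (hinv.mul_const (∑ p ∈ V N M, w p * f p))).add herr
  rw [zero_mul, sub_zero, add_zero] at hall
  refine hall.congr' ?_
  filter_upwards [eventually_ge_atTop M] with m hm
  have hpow : (N : ℝ) ^ (m + 1) ≠ 0 := by positivity
  rw [sum_V_split hm]
  simp only [Pi.mul_apply, mul_sub, Finset.sum_sub_distrib, mul_left_comm (w _), ← Finset.mul_sum, mul_add]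
  rw [inv_mul_cancel_left₀ hpow]
  ring

lemma chi_congr {N M : ℕ} {p q r : SSp N} (h : ∀ i < M + 1, q i = r i) :
    chi N M p q = chi N M p r := by
  have hiff : q ∈ cyl N (M + 1) p ↔ r ∈ cyl N (M + 1) p :=
    forall₂_congr fun i hi => by rw [h i hi]
  simp only [chi, Set.indicator_apply, hiff, Pi.one_apply]

lemma continuous_chi (N M : ℕ) (p : SSp N) : Continuous (chi N M p) := by
  have hloc : IsLocallyConstant (chi N M p) := by
    refine (IsLocallyConstant.iff_exists_open _).2 fun x =>
      ⟨⋂ i ∈ Finset.range (M + 1), (fun y : SSp N => y i) ⁻¹' {x i},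
        isOpen_biInter_finset fun i _ => (isOpen_discrete _).preimage (continuous_apply i),
        by simp, fun y hy => chi_congr fun i hi => ?_⟩
    simp only [Set.mem_iInter, Finset.mem_range] at hy
    exact hy i hi
  exact hloc.continuous

lemma chi_apply_of_mem_V {N M : ℕ} {p q : SSp N} (hp : p ∈ V N M) (hq : q ∈ V N M) :
    chi N M p q = if q = p then 1 else 0 := by
  have hiff : q ∈ cyl N (M + 1) p ↔ q = p :=
    ⟨fun h => eq_of_mem_V hq hp h, fun h => h ▸ fun _ _ => rfl⟩
  simp [chi, Set.indicator_apply, hiff]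

lemma H_chi_eq {N M m : ℕ} (hm : M ≤ m) (p q : SSp N) :
    H N m (chi N M p) q = H N M (chi N M p) q := by
  symm
  refine Finset.sum_subset (Finset.Icc_subset_Icc_right hm) fun i hi hi' =>
    Finset.sum_eq_zero fun r hr => ?_
  simp only [Finset.mem_Icc] at hi hi'
  rw [chi_congr fun k hk => (Finset.mem_filter.1 hr).2.2 k (by omega), sub_self]

lemma H_eq_zero_of_notMem {N M m : ℕ} {q : SSp N} (hq : q ∈ V N m) (hqM : q ∉ V N M)
    (w : SSp N → ℝ) : H N M w q = 0 := by
  rw [H, Finset.Icc_eq_empty fun h => hqM ((kappa_le_iff hq).1 h), Finset.sum_empty]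

lemma exists_neumann {N : ℕ} (hN : 2 ≤ N) {μ : Measure (SSp N)}
    [IsProbabilityMeasure μ] (hμ : IsBernoulli N μ) {M : ℕ} {u f : SSp N → ℝ}
    (huf : IsLaplacianOn N M u f) :
    ∃ du : SSp N → ℝ, ∀ p ∈ V N M, Tendsto (fun m => -(H N m u p)) atTop (nhds (du p)) := by
  refine ⟨fun p => (∫ x, chi N M p x * f x ∂μ) - ∑ q ∈ V N M, u q * H N M (chi N M p) q,
    fun p hp => ?_⟩
  refine ((tendsto_sum_interior hN hμ huf (continuous_chi N M p)).sub_const _).congr' ?_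
  filter_upwards [eventually_ge_atTop M] with m hm
  have hsymm := sum_mul_H_comm N m (chi N M p) u
  have hbdry : ∑ q ∈ V N M, chi N M p q * H N m u q = H N m u p := by
    rw [Finset.sum_eq_single_of_mem p hp, chi_apply_of_mem_V hp hp, if_pos rfl, one_mul]
    intro q hq hne
    rw [chi_apply_of_mem_V hp hq, if_neg hne, zero_mul]
  have hint : ∑ q ∈ V N m \ V N M, u q * H N m (chi N M p) q = 0 :=
    Finset.sum_eq_zero fun q hq => by
      rw [Finset.mem_sdiff] at hq
      rw [H_chi_eq hm, H_eq_zero_of_notMem hq.1 hq.2, mul_zero]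
  rw [sum_V_split hm, sum_V_split hm, hbdry, hint, add_zero] at hsymm
  simp only [H_chi_eq hm] at hsymm
  linarith

/-- Gauss–Green: for `u, v ∈ 𝒟_M` with `Δu = f`, `Δv = g`,
`∫ (v Δu − u Δv) dμ = Σ_{p ∈ V_M} (v(p)(du)(p) − u(p)(dv)(p))`. -/
theorem statement14 (N : ℕ) (hN : 2 ≤ N)
    (μ : Measure (SSp N)) [IsProbabilityMeasure μ] (hμ : IsBernoulli N μ)
    (M : ℕ) (u v f g : SSp N → ℝ)
    (huf : IsLaplacianOn N M u f) (hvg : IsLaplacianOn N M v g) :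
    ∃ du dv : SSp N → ℝ,
      (∀ p ∈ V N M, Tendsto (fun m => -(H N m u p)) atTop (nhds (du p))) ∧
      (∀ p ∈ V N M, Tendsto (fun m => -(H N m v p)) atTop (nhds (dv p))) ∧
      ∫ x, (v x * f x - u x * g x) ∂μ =
        ∑ p ∈ V N M, (v p * du p - u p * dv p) := by
  obtain ⟨du, hdu⟩ := exists_neumann hN hμ huf
  obtain ⟨dv, hdv⟩ := exists_neumann hN hμ hvg
  refine ⟨du, dv, hdu, hdv, ?_⟩
  have hint := (tendsto_sum_interior hN hμ huf hvg.1).sub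
    (tendsto_sum_interior hN hμ hvg huf.1)
  have hvf : Integrable (fun x => v x * f x) μ := integrable_of_continuous (hvg.1.mul huf.2.1)
  have hug : Integrable (fun x => u x * g x) μ := integrable_of_continuous (huf.1.mul hvg.2.1)
  rw [← integral_sub hvf hug] at hint
  have hbdry := tendsto_finsetSum (V N M) fun p hp =>
    ((hdu p hp).const_mul (v p)).sub ((hdv p hp).const_mul (u p))
  refine tendsto_nhds_unique hint (hbdry.congr' ?_)
  filter_upwards [eventually_ge_atTop M] with m hm
  have hsymm := sum_mul_H_comm N m v u
  rw [sum_V_split hm, sum_V_split hm] at hsymm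
  simp only [mul_neg, Finset.sum_sub_distrib, Finset.sum_neg_distrib]
  linarith
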